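/- arXiv:2110.00769 — 4 statements merged into one kernel-verified Lean document; each statement's English description precedes it below -/
import Mathlib

section
/- Let q be a prime power, n ≥ 2, let α_1, …, α_n be pairwise distinct elements of 𝔽_{q²}, and let v_1, …, v_n ∈ 𝔽_{q²}^* satisfy v_i^{q+1} · ∏_{j≠i}(α_i − α_j) = 1 for all i. Let k ≥ 1 be an integer with k(q+1) ≤ n + q − 1. Then the code C = {(v_1 f(α_1), …, v_n f(α_n)) : f ∈ 𝔽_{q²}[x], deg f ≤ k−1} is an MDS Hermitian self-orthogonal [n,k]_{q²} code. -/
/-!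
*MDS.* A nonzero polynomial of degree less than `k` has fewer than `k` zeros among the distinct
points `αᵢ`, so its codeword has weight at least `n - k + 1`. A product of `k - 1` of the factors
`X - αᵢ` attains the bound.

*Self-orthogonality.* The Hermitian product of the words of `f` and `g` is
`∑ᵢ vᵢ^(q+1) (f g^q)(αᵢ) = ∑ᵢ (f g^q)(αᵢ) / ∏_{j ≠ i} (αᵢ - αⱼ)`. By Lagrange interpolation this
is the coefficient of `X^(n-1)` in `f g^q`, the elementary form of the residue theorem on the
projective line. It vanishes because `deg (f g^q) ≤ (k - 1)(q + 1) ≤ n - 2`.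
-/

open scoped BigOperators

/-- A linear code `C ⊆ 𝔽_{q²}ⁿ` is Hermitian self-orthogonal if
`⟨c,c'⟩_H = ∑ i, c i * (c' i)^q = 0` for all codewords `c, c'`. -/
def IsHermSelfOrth (q : ℕ) {F : Type*} [Field F] {n : ℕ}
    (C : Submodule F (Fin n → F)) : Prop :=
  ∀ c ∈ C, ∀ c' ∈ C, ∑ i, c i * (c' i) ^ q = 0

/-- The minimum Hamming distance of the code `C` equals `d`. -/
def MinDistEq {F : Type*} [Field F] {n : ℕ}
    (C : Submodule F (Fin n → F)) (d : ℕ) : Prop :=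
  (∀ c ∈ C, c ≠ 0 → d ≤ Set.ncard {i | c i ≠ 0}) ∧
  (∃ c ∈ C, c ≠ 0 ∧ Set.ncard {i | c i ≠ 0} = d)

/-- The generalized Reed–Solomon evaluation code
`{(v₁ f(α₁), …, vₙ f(αₙ)) : f ∈ F[x], deg f ≤ k − 1}` (polynomials of degree `< k`). -/
noncomputable def evalCode {F : Type*} [Field F] {n : ℕ} (k : ℕ)
    (α v : Fin n → F) : Submodule F (Fin n → F) :=
  Submodule.map
    (show Polynomial F →ₗ[F] (Fin n → F) from
      { toFun := fun f : Polynomial F => fun i => v i * Polynomial.eval (α i) f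
        map_add' := fun f g => by funext i; simp [mul_add]
        map_smul' := fun c f => by
          funext i; simp [Polynomial.eval_smul, smul_eq_mul]; ring })
    (Polynomial.degreeLT F k)

section WeightedEvaluation

open Polynomial Finset

variable {ι R F : Type*} [CommRing R] [Field F]

/-- The weighted evaluation map `f ↦ (vᵢ f(αᵢ))ᵢ`. A generalized Reed–Solomon code is the image
under it of a space of polynomials of bounded degree. -/
noncomputable def weightedEval (α v : ι → R) : R[X] →ₗ[R] (ι → R) :=
  LinearMap.pi fun i => v i • leval (α i)

@[simp]
theorem weightedEval_apply (α v : ι → R) (f : R[X]) (i : ι) :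
    weightedEval α v f i = v i * f.eval (α i) :=
  rfl

theorem weightedEval_injOn_degreeLT [IsDomain R] [Fintype ι] {α v : ι → R}
    (hα : Function.Injective α) (hv : ∀ i, v i ≠ 0) {k : ℕ} (hk : k ≤ Fintype.card ι) :
    Set.InjOn (weightedEval α v) (degreeLT R k) := by
  intro f hf g hg hfg
  have hk' : (k : WithBot ℕ) ≤ #(univ : Finset ι) := by exact_mod_cast hk
  exact eq_of_degrees_lt_of_eval_index_eq univ hα.injOn
    ((mem_degreeLT.1 hf).trans_le hk') ((mem_degreeLT.1 hg).trans_le hk')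
    fun i _ => mul_left_cancel₀ (hv i) (congrFun hfg i)

theorem finrank_map_weightedEval_degreeLT [IsDomain R] [Fintype ι] {α v : ι → R}
    (hα : Function.Injective α) (hv : ∀ i, v i ≠ 0) {k : ℕ} (hk : k ≤ Fintype.card ι) :
    Module.finrank R ((degreeLT R k).map (weightedEval α v)) = k := by
  have hinj : Function.Injective ((weightedEval α v).domRestrict (degreeLT R k)) :=
    (weightedEval_injOn_degreeLT hα hv hk).injective
  rw [← LinearMap.range_domRestrict, LinearMap.finrank_range_of_inj hinj,
    (degreeLTEquiv R k).finrank_eq, Module.finrank_fin_fun]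

theorem card_filter_eval_eq_zero_le_natDegree [IsDomain R] [DecidableEq R] {s : Finset ι}
    {α : ι → R} (hα : Set.InjOn α s) {f : R[X]} (hf : f ≠ 0) :
    #{i ∈ s | f.eval (α i) = 0} ≤ f.natDegree := by
  by_contra! hlt
  have hzeros : Set.InjOn α ↑{i ∈ s | f.eval (α i) = 0} :=
    hα.mono (coe_subset.2 (filter_subset _ s))
  exact hf (eq_zero_of_degree_lt_of_eval_index_eq_zero _ hzeros
    ((natDegree_lt_iff_degree_lt hf).1 hlt) fun i hi => (mem_filter.1 hi).2)

theorem card_le_natDegree_add_hammingNorm_weightedEval [IsDomain R] [DecidableEq R] [Fintype ι]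
    {α v : ι → R} (hα : Function.Injective α) (hv : ∀ i, v i ≠ 0) {f : R[X]} (hf : f ≠ 0) :
    Fintype.card ι ≤ f.natDegree + hammingNorm (weightedEval α v f) := by
  have hweight : hammingNorm (weightedEval α v f) = #{i | f.eval (α i) ≠ 0} := by
    simp [hammingNorm, hv]
  rw [hweight, ← card_univ, ← card_filter_add_card_filter_not (fun i => f.eval (α i) = 0)]
  gcongr
  exact card_filter_eval_eq_zero_le_natDegree hα.injOn hf

theorem hammingNorm_weightedEval_nodal [IsDomain R] [DecidableEq R] [Fintype ι] [DecidableEq ι]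
    {α v : ι → R} (hα : Function.Injective α) (hv : ∀ i, v i ≠ 0) (s : Finset ι) :
    hammingNorm (weightedEval α v (Lagrange.nodal s α)) = #sᶜ := by
  rw [hammingNorm]
  congr 1
  ext i
  simp [hv, Lagrange.eval_nodal, prod_eq_zero_iff, sub_eq_zero, hα.eq_iff]

theorem sum_nodalWeight_mul_eval_eq_zero [DecidableEq ι] {s : Finset ι} {α : ι → F}
    (hα : Set.InjOn α s) {f : F[X]} (hf : f.natDegree + 1 < #s) :
    ∑ i ∈ s, Lagrange.nodalWeight s α i * f.eval (α i) = 0 := by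
  have hdeg : f.degree < #s :=
    degree_le_natDegree.trans_lt (by exact_mod_cast (Nat.lt_succ_self _).trans hf)
  calc ∑ i ∈ s, Lagrange.nodalWeight s α i * f.eval (α i)
      = ∑ i ∈ s, f.eval (α i) / ∏ j ∈ s.erase i, (α i - α j) := by
        simp only [Lagrange.nodalWeight, prod_inv_distrib, div_eq_inv_mul]
    _ = f.coeff (#s - 1) := (Lagrange.coeff_eq_sum hα hdeg).symm
    _ = 0 := coeff_eq_zero_of_natDegree_lt (by lia)

theorem sum_weightedEval_mul_weightedEval_pow_eq_zero [Fintype ι] [DecidableEq ι] {α v : ι → F}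
    {q : ℕ} (hα : Function.Injective α)
    (hnorm : ∀ i, v i ^ (q + 1) = Lagrange.nodalWeight univ α i) {f g : F[X]}
    (hfg : f.natDegree + q * g.natDegree + 1 < Fintype.card ι) :
    ∑ i, weightedEval α v f i * weightedEval α v g i ^ q = 0 := by
  have hdeg : (f * g ^ q).natDegree ≤ f.natDegree + q * g.natDegree :=
    natDegree_mul_le_of_le le_rfl natDegree_pow_le
  calc ∑ i, weightedEval α v f i * weightedEval α v g i ^ q
      = ∑ i, Lagrange.nodalWeight univ α i * (f * g ^ q).eval (α i) := by
        refine sum_congr rfl fun i _ => ?_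
        rw [weightedEval_apply, weightedEval_apply, ← hnorm, eval_mul, eval_pow]
        ring
    _ = 0 := sum_nodalWeight_mul_eval_eq_zero hα.injOn (by rw [card_univ]; lia)

end WeightedEvaluation

section EvalCode

open Polynomial Finset

variable {F : Type*} [Field F] {n k : ℕ} {α v : Fin n → F}

theorem evalCode_eq_map_weightedEval (k : ℕ) (α v : Fin n → F) :
    evalCode k α v = (degreeLT F k).map (weightedEval α v) :=
  rfl

theorem mem_evalCode {c : Fin n → F} :
    c ∈ evalCode k α v ↔ ∃ f : F[X], f.degree < k ∧ weightedEval α v f = c := by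
  simp only [evalCode_eq_map_weightedEval, Submodule.mem_map, mem_degreeLT]

theorem finrank_evalCode (hα : Function.Injective α) (hv : ∀ i, v i ≠ 0) (hk : k ≤ n) :
    Module.finrank F (evalCode k α v) = k :=
  finrank_map_weightedEval_degreeLT hα hv (hk.trans_eq (Fintype.card_fin n).symm)

theorem ncard_setOf_ne_zero_eq_hammingNorm {ι M : Type*} [Fintype ι] [Zero M] [DecidableEq M]
    (c : ι → M) : Set.ncard {i | c i ≠ 0} = hammingNorm c := by
  rw [hammingNorm, ← Set.ncard_coe_finset, coe_filter_univ]

theorem minDistEq_evalCode (hα : Function.Injective α) (hv : ∀ i, v i ≠ 0) (hk : 1 ≤ k)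
    (hkn : k ≤ n) : MinDistEq (evalCode k α v) (n - k + 1) := by
  classical
  simp only [MinDistEq, ncard_setOf_ne_zero_eq_hammingNorm]
  constructor
  · intro c hc hc0
    obtain ⟨f, hf, rfl⟩ := mem_evalCode.1 hc
    have hf0 : f ≠ 0 := fun h => hc0 (by rw [h, map_zero])
    have hweight := card_le_natDegree_add_hammingNorm_weightedEval hα hv hf0
    rw [Fintype.card_fin] at hweight
    have hdeg := (natDegree_lt_iff_degree_lt hf0).2 hf
    lia
  · obtain ⟨s, hs⟩ : ∃ s : Finset (Fin n), #s = k - 1 :=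
      (exists_subset_card_eq (s := univ) (by rw [card_fin]; lia)).imp fun _ h => h.2
    have hweight : hammingNorm (weightedEval α v (Lagrange.nodal s α)) = n - k + 1 := by
      rw [hammingNorm_weightedEval_nodal hα hv, card_compl, Fintype.card_fin, hs]
      lia
    have hdeg : (Lagrange.nodal s α).degree < k := by
      rw [Lagrange.degree_nodal, hs]
      exact_mod_cast Nat.sub_one_lt_of_lt hk
    exact ⟨_, mem_evalCode.2 ⟨_, hdeg, rfl⟩,
      hammingNorm_ne_zero_iff.1 (hweight ▸ Nat.succ_ne_zero _), hweight⟩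

theorem isHermSelfOrth_evalCode {q : ℕ} (hα : Function.Injective α)
    (hnorm : ∀ i, v i ^ (q + 1) = Lagrange.nodalWeight univ α i)
    (hk : k * (q + 1) < n + q) : IsHermSelfOrth q (evalCode k α v) := by
  intro c hc c' hc'
  obtain ⟨f, hf, rfl⟩ := mem_evalCode.1 hc
  obtain ⟨g, hg, rfl⟩ := mem_evalCode.1 hc'
  obtain rfl | hf0 := eq_or_ne f 0
  · simp
  have hfk : f.natDegree + 1 ≤ k := (natDegree_lt_iff_degree_lt hf0).2 hf
  have hgk : g.natDegree + 1 ≤ k := by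
    obtain rfl | hg0 := eq_or_ne g 0
    · rw [natDegree_zero]
      lia
    · exact (natDegree_lt_iff_degree_lt hg0).2 hg
  refine sum_weightedEval_mul_weightedEval_pow_eq_zero hα hnorm ?_
  rw [Fintype.card_fin]
  linarith [Nat.mul_le_mul_left q hgk]

end EvalCode

theorem stmt2_general (q : ℕ) (F : Type*) [Field F] (n : ℕ)
    (α : Fin n → F) (hα : Function.Injective α) (v : Fin n → F)
    (hnorm : ∀ i, v i ^ (q + 1) * ∏ j ∈ Finset.univ.erase i, (α i - α j) = 1)
    (k : ℕ) (hk1 : 1 ≤ k) (hk2 : k * (q + 1) < n + q) :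
    Module.finrank F (evalCode k α v) = k ∧
    IsHermSelfOrth q (evalCode k α v) ∧
    MinDistEq (evalCode k α v) (n - k + 1) := by
  have hkn : k ≤ n := by
    by_contra! hlt
    linarith [Nat.mul_le_mul_right q hk1]
  have hv : ∀ i, v i ≠ 0 := fun i =>
    (pow_ne_zero_iff q.succ_ne_zero).1 (left_ne_zero_of_mul_eq_one (hnorm i))
  have hnodal : ∀ i, v i ^ (q + 1) = Lagrange.nodalWeight Finset.univ α i := fun i => by
    rw [Lagrange.nodalWeight, Finset.prod_inv_distrib]
    exact eq_inv_of_mul_eq_one_left (hnorm i)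
  exact ⟨finrank_evalCode hα hv hkn, isHermSelfOrth_evalCode hα hnodal hk2,
    minDistEq_evalCode hα hv hk1 hkn⟩

/-- Genus-zero sufficient condition: with `vᵢ^{q+1} ∏_{j≠i}(αᵢ−αⱼ) = 1` and
`k(q+1) ≤ n+q−1`, the GRS code `{(v₁f(α₁),…,vₙf(αₙ)) : deg f ≤ k−1}` is an MDS
Hermitian self-orthogonal `[n,k]_{q²}` code. -/
theorem stmt2 (q : ℕ) (hq : IsPrimePow q)
    (F : Type*) [Field F] [Fintype F] (hF : Fintype.card F = q ^ 2)
    (n : ℕ) (hn : 2 ≤ n)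
    (α : Fin n → F) (hα : Function.Injective α)
    (v : Fin n → F) (hv : ∀ i, v i ≠ 0)
    (hnorm : ∀ i, v i ^ (q + 1) * ∏ j ∈ Finset.univ.erase i, (α i - α j) = 1)
    (k : ℕ) (hk1 : 1 ≤ k) (hk2 : k * (q + 1) ≤ n + q - 1) :
    Module.finrank F (evalCode k α v) = k ∧
    IsHermSelfOrth q (evalCode k α v) ∧
    MinDistEq (evalCode k α v) (n - k + 1) :=
  stmt2_general q F n α hα v hnorm k hk1 (by lia)
end

section
/- Let q be a prime power, let α_1, …, α_n be pairwise distinct elements of 𝔽_{q²}, let v_1, …, v_n ∈ 𝔽_{q²}^* satisfy v_i^{q+1} · ∏_{j≠i}(α_i − α_j) = 1 for all i, and let k ≥ 1 satisfy k(q+1) = n−1, so that C_k = {(v_1 f(α_1), …, v_n f(α_n)) : deg f ≤ k−1} is an MDS Hermitian self-orthogonal [n,k]_{q²} code. Let α ∈ 𝔽_{q²} satisfy α^{q+1} = −1. Then the code of length n+1 spanned by the vectors (v_1 α_1^j, …, v_n α_n^j, 0) for 0 ≤ j ≤ k−1 together with the vector (v_1 α_1^k, …, v_n α_n^k, α) is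 an MDS Hermitian self-orthogonal [n+1, k+1]_{q²} code. -/
/-!
The extended code is the image of the polynomials `f` of degree at most `k` under
`f ↦ (v₁ f(α₁), …, vₙ f(αₙ), a f_k)`, where `f_k` is the coefficient of `X ^ k` in `f`.

* Self-orthogonality: `v_i ^ (q + 1) = 1 / ∏_{j ≠ i} (α_i - α_j)`, so by Lagrange interpolation
  `∑ i, v_i ^ (q + 1) P(α_i)` is the coefficient of `X ^ (n - 1)` in `P` whenever `deg P < n`.
  For `P = f g ^ q`, of degree at most `k (q + 1) = n - 1`, that coefficient is `f_k g_k ^ q`, and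
  the last coordinate contributes `a ^ (q + 1) f_k g_k ^ q = -f_k g_k ^ q`.
* Weight: a nonzero `f` has at most `k` zeros among the `α_i`, and at most `k - 1` if `f_k = 0`, the
  only case in which the last coordinate vanishes too. So every nonzero `f` gives a word of weight
  at least `n - k + 1`; hence the evaluation map is injective, and the Singleton bound shows that
  this weight is attained.
-/

open scoped BigOperators

/-- The extended code of length `n+1` spanned by `(v₁α₁ʲ,…,vₙαₙʲ,0)` for `0 ≤ j ≤ k−1`
together with `(v₁α₁ᵏ,…,vₙαₙᵏ,a)`. -/
def extCode {F : Type*} [Field F] {n : ℕ} (k : ℕ) (α v : Fin n → F) (a : F) :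
    Submodule F (Fin (n + 1) → F) :=
  Submodule.span F
    ({w | ∃ j < k, w = Fin.snoc (fun i => v i * α i ^ j) 0} ∪
      {Fin.snoc (fun i => v i * α i ^ k) a})

section Lagrange

open Polynomial

variable {ι R F : Type*} [DecidableEq ι] [CommRing R] [Field F]

lemma injOn_of_mul_prod_sub_eq_one [Nontrivial R] {s : Finset ι} {α w : ι → R}
    (hw : ∀ i ∈ s, w i * ∏ j ∈ s.erase i, (α i - α j) = 1) : Set.InjOn α s := by
  intro i hi j hj hij
  by_contra hne
  have hprod : ∏ l ∈ s.erase i, (α i - α l) = 0 :=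
    Finset.prod_eq_zero (Finset.mem_erase.mpr ⟨Ne.symm hne, hj⟩) (sub_eq_zero.mpr hij)
  simpa [hprod] using hw i hi

lemma sum_mul_eval_eq_coeff_card_sub_one {s : Finset ι} {α w : ι → F}
    (hw : ∀ i ∈ s, w i * ∏ j ∈ s.erase i, (α i - α j) = 1) {P : F[X]} (hP : P.degree < s.card) :
    ∑ i ∈ s, w i * P.eval (α i) = P.coeff (s.card - 1) := by
  rw [Lagrange.coeff_eq_sum (injOn_of_mul_prod_sub_eq_one hw) hP]
  refine Finset.sum_congr rfl fun i hi => ?_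
  rw [eq_inv_of_mul_eq_one_left (hw i hi), div_eq_inv_mul]

end Lagrange

section HammingNorm

open Polynomial

variable {ι F : Type*} [Fintype ι] [Field F] [DecidableEq F]

lemma ncard_ne_zero_eq_hammingNorm {M : Type*} [Zero M] [DecidableEq M] (c : ι → M) :
    Set.ncard {i | c i ≠ 0} = hammingNorm c := by
  rw [Set.ncard_eq_toFinset_card', Set.toFinset_ofPred, hammingNorm]

lemma hammingNorm_snoc {M : Type*} [Zero M] [DecidableEq M] {n : ℕ} (c : Fin n → M) (x : M) :
    hammingNorm (Fin.snoc c x : Fin (n + 1) → M) = hammingNorm c + if x ≠ 0 then 1 else 0 := by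
  simp [hammingNorm, Finset.card_filter, Fin.sum_univ_castSucc]

lemma card_le_hammingNorm_eval_add_natDegree {R : Type*} [CommRing R] [IsDomain R] [DecidableEq R]
    {α v : ι → R} (hα : Function.Injective α) (hv : ∀ i, v i ≠ 0) {f : R[X]} (hf : f ≠ 0) :
    Fintype.card ι ≤ hammingNorm (fun i => v i * f.eval (α i)) + f.natDegree := by
  have hzeros : (Finset.univ.filter fun i => ¬ v i * f.eval (α i) ≠ 0).card ≤ f.natDegree := by
    rw [← Finset.card_image_of_injective _ hα]
    refine card_le_degree_of_subset_roots fun x hx => ?_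
    obtain ⟨i, hi, rfl⟩ := Finset.mem_image.mp hx
    simpa [hf, hv i] using hi
  rw [← Finset.card_univ, hammingNorm,
    ← Finset.card_filter_add_card_filter_not (fun i => v i * f.eval (α i) ≠ 0)]
  exact Nat.add_le_add_left hzeros _

/-- The Singleton bound: some nonzero codeword vanishes at `finrank F C - 1` given coordinates. -/
lemma exists_mem_hammingNorm_add_finrank_le {C : Submodule F (ι → F)} (hC : C ≠ ⊥) :
    ∃ c ∈ C, c ≠ 0 ∧ hammingNorm c + Module.finrank F C ≤ Fintype.card ι + 1 := by
  classical
  have hpos : 0 < Module.finrank F C := Nat.pos_of_ne_zero (mt Submodule.finrank_eq_zero.mp hC)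
  have hle : Module.finrank F C ≤ Fintype.card ι := by
    simpa using C.finrank_le
  obtain ⟨s, -, hs⟩ := Finset.exists_subset_card_eq (s := (Finset.univ : Finset ι))
    (n := Module.finrank F C - 1) (by rw [Finset.card_univ]; omega)
  let restrict : C →ₗ[F] (s → F) := LinearMap.funLeft F F Subtype.val ∘ₗ C.subtype
  have hker : LinearMap.ker restrict ≠ ⊥ := LinearMap.ker_ne_bot_of_finrank_lt (by simp [hs, hpos])
  obtain ⟨c, hc, hc0⟩ := Submodule.exists_mem_ne_zero_of_ne_bot hker
  have hvanish : ∀ i ∈ s, (c : ι → F) i = 0 := fun i hi => congrFun hc ⟨i, hi⟩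
  have hnorm : hammingNorm (c : ι → F) ≤ sᶜ.card := Finset.card_le_card fun i hi =>
    Finset.mem_compl.mpr fun his => (Finset.mem_filter.mp hi).2 (hvanish i his)
  refine ⟨c, c.2, by simpa using hc0, ?_⟩
  rw [Finset.card_compl] at hnorm
  omega

lemma minDistEq_of_forall_le_hammingNorm {n : ℕ} {C : Submodule F (Fin n → F)}
    (hC : C ≠ ⊥) (h : ∀ c ∈ C, c ≠ 0 → n + 1 ≤ hammingNorm c + Module.finrank F C) :
    MinDistEq C (n + 1 - Module.finrank F C) := by
  simp only [MinDistEq, ncard_ne_zero_eq_hammingNorm]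
  refine ⟨fun c hc hc0 => Nat.sub_le_iff_le_add.mpr (h c hc hc0), ?_⟩
  obtain ⟨c, hc, hc0, hle⟩ := exists_mem_hammingNorm_add_finrank_le hC
  rw [Fintype.card_fin] at hle
  exact ⟨c, hc, hc0, Nat.eq_sub_of_add_eq (hle.antisymm (h c hc hc0))⟩

end HammingNorm

section ExtendedCode

open Polynomial

variable {F : Type*} [Field F] {n k : ℕ} {α v : Fin n → F} {a : F}

lemma mem_degreeLT_add_one_iff {R : Type*} [Semiring R] {f : R[X]} :
    f ∈ degreeLT R (k + 1) ↔ f.natDegree ≤ k := by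
  rw [degreeLT_succ_eq_degreeLE, mem_degreeLE, natDegree_le_iff_degree_le]

/-- The evaluation map `f ↦ (v₁ f(α₁), …, vₙ f(αₙ), a f_k)` of the extended code, with `f_k` the
coefficient of `X ^ k` in `f`. It is defined on all polynomials; on those of degree at most `k` the
last coordinate is `a` times the value at infinity. -/
noncomputable def extEval (k : ℕ) (α v : Fin n → F) (a : F) : F[X] →ₗ[F] (Fin (n + 1) → F) where
  toFun f := Fin.snoc (fun i => v i * f.eval (α i)) (a * f.coeff k)
  map_add' f g := by
    ext i
    cases i using Fin.lastCases <;> simp [mul_add]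
  map_smul' c f := by
    ext i
    cases i using Fin.lastCases <;> simp [mul_left_comm]

lemma extEval_apply (f : F[X]) :
    extEval k α v a f = Fin.snoc (fun i => v i * f.eval (α i)) (a * f.coeff k) := rfl

lemma extEval_X_pow (j : ℕ) :
    extEval k α v a (X ^ j) = Fin.snoc (fun i => v i * α i ^ j) (if k = j then a else 0) := by
  simp [extEval_apply, coeff_X_pow]

lemma extCode_eq_map_degreeLT :
    extCode k α v a = (degreeLT F (k + 1)).map (extEval k α v a) := by
  classical
  rw [degreeLT_eq_span_X_pow, Submodule.map_span, extCode, Finset.range_add_one,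
    Finset.image_insert, Finset.coe_insert, Set.image_insert_eq, Set.insert_eq, Set.union_comm]
  congr 2
  · rw [extEval_X_pow, if_pos rfl]
  · ext w
    simp only [Set.mem_ofPred_eq, Finset.coe_image, Finset.coe_range, Set.mem_image, Set.mem_Iio,
      exists_exists_and_eq_and]
    refine exists_congr fun j => and_congr_right fun hj => ?_
    rw [extEval_X_pow, if_neg hj.ne', eq_comm]

lemma mem_extCode {c : Fin (n + 1) → F} :
    c ∈ extCode k α v a ↔ ∃ f : F[X], f.natDegree ≤ k ∧ extEval k α v a f = c := by
  simp only [extCode_eq_map_degreeLT, Submodule.mem_map, mem_degreeLT_add_one_iff]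

lemma le_hammingNorm_extEval [DecidableEq F] (hα : Function.Injective α) (hv : ∀ i, v i ≠ 0)
    (ha : a ≠ 0) {f : F[X]} (hf : f ≠ 0) (hfk : f.natDegree ≤ k) :
    n + 1 ≤ hammingNorm (extEval k α v a f) + k := by
  have hweight := card_le_hammingNorm_eval_add_natDegree hα hv hf
  rw [Fintype.card_fin] at hweight
  rw [extEval_apply, hammingNorm_snoc]
  rcases hfk.lt_or_eq with hlt | rfl
  · omega
  · have hlast : a * f.coeff f.natDegree ≠ 0 := mul_ne_zero ha (leadingCoeff_ne_zero.mpr hf)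
    rw [if_pos hlast]
    omega

lemma finrank_extCode (hα : Function.Injective α) (hv : ∀ i, v i ≠ 0) (ha : a ≠ 0) (hk : k ≤ n) :
    Module.finrank F (extCode k α v a) = k + 1 := by
  classical
  have hinj : Function.Injective ((extEval k α v a).domRestrict (degreeLT F (k + 1))) := by
    refine (injective_iff_map_eq_zero _).mpr fun ⟨f, hf⟩ hf0 => Subtype.ext ?_
    by_contra hne
    have hweight := le_hammingNorm_extEval hα hv ha hne (mem_degreeLT_add_one_iff.mp hf)
    rw [show extEval k α v a f = 0 from hf0, hammingNorm_zero] at hweight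
    omega
  rw [extCode_eq_map_degreeLT, ← LinearMap.range_domRestrict, LinearMap.finrank_range_of_inj hinj,
    (degreeLTEquiv F (k + 1)).finrank_eq, Module.finrank_fin_fun]

lemma minDistEq_extCode (hα : Function.Injective α) (hv : ∀ i, v i ≠ 0) (ha : a ≠ 0)
    (hk : k ≤ n) : MinDistEq (extCode k α v a) (n - k + 1) := by
  classical
  have hrank := finrank_extCode hα hv ha hk
  have hbot : extCode k α v a ≠ ⊥ := by
    intro h
    rw [h, finrank_bot] at hrank
    omega
  have hdist := minDistEq_of_forall_le_hammingNorm hbot fun c hc hc0 => by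
    obtain ⟨f, hfk, rfl⟩ := mem_extCode.mp hc
    have hf : f ≠ 0 := fun h => hc0 (by rw [h, map_zero])
    rw [hrank, ← add_assoc]
    exact Nat.succ_le_succ (le_hammingNorm_extEval hα hv ha hf hfk)
  rwa [hrank, Nat.add_sub_add_right, Nat.sub_add_comm hk] at hdist

lemma isHermSelfOrth_extCode {q : ℕ}
    (hw : ∀ i, v i ^ (q + 1) * ∏ j ∈ Finset.univ.erase i, (α i - α j) = 1)
    (hn : n = k * (q + 1) + 1) (ha : a ^ (q + 1) = -1) :
    IsHermSelfOrth q (extCode k α v a) := by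
  intro c hc c' hc'
  obtain ⟨f, hf, rfl⟩ := mem_extCode.mp hc
  obtain ⟨g, hg, rfl⟩ := mem_extCode.mp hc'
  have hgq : (g ^ q).natDegree ≤ q * k := natDegree_pow_le_of_le q hg
  have hn' : n - 1 = k + q * k := by
    rw [hn, Nat.add_sub_cancel]
    ring
  have hdeg : (f * g ^ q).degree < (Finset.univ : Finset (Fin n)).card := by
    rw [Finset.card_univ, Fintype.card_fin]
    refine degree_le_natDegree.trans_lt (Nat.cast_lt.mpr ?_)
    have := natDegree_mul_le_of_le hf hgq
    omega
  have hsum : ∑ i, v i * f.eval (α i) * (v i * g.eval (α i)) ^ q = f.coeff k * g.coeff k ^ q :=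
    calc ∑ i, v i * f.eval (α i) * (v i * g.eval (α i)) ^ q
        = ∑ i, v i ^ (q + 1) * (f * g ^ q).eval (α i) :=
          Finset.sum_congr rfl fun i _ => by rw [eval_mul, eval_pow]; ring
      _ = (f * g ^ q).coeff (k + q * k) := by
          rw [sum_mul_eval_eq_coeff_card_sub_one (fun i _ => hw i) hdeg, Finset.card_univ,
            Fintype.card_fin, hn']
      _ = f.coeff k * g.coeff k ^ q := by
          rw [coeff_mul_add_eq_of_natDegree_le hf hgq, coeff_pow_of_natDegree_le hg]
  simp only [extEval_apply, Fin.sum_univ_castSucc, Fin.snoc_castSucc, Fin.snoc_last]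
  rw [hsum]
  linear_combination f.coeff k * g.coeff k ^ q * ha

end ExtendedCode

theorem stmt3_general {F : Type*} [Field F] {q n k : ℕ} {α v : Fin n → F} {a : F}
    (hnorm : ∀ i, v i ^ (q + 1) * ∏ j ∈ Finset.univ.erase i, (α i - α j) = 1)
    (hn : n = k * (q + 1) + 1) (ha : a ^ (q + 1) = -1) :
    Module.finrank F (extCode k α v a) = k + 1 ∧
    IsHermSelfOrth q (extCode k α v a) ∧
    MinDistEq (extCode k α v a) ((n + 1) - (k + 1) + 1) := by
  have hα : Function.Injective α :=
    Set.injOn_univ.mp (by simpa using injOn_of_mul_prod_sub_eq_one fun i _ => hnorm i)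
  have hv : ∀ i, v i ≠ 0 := fun i h => by simpa [h] using hnorm i
  have ha0 : a ≠ 0 := fun h => by simp [h] at ha
  have hk : k ≤ n := by
    rw [hn]
    exact (Nat.le_mul_of_pos_right k q.succ_pos).trans (Nat.le_succ _)
  rw [Nat.add_sub_add_right]
  exact ⟨finrank_extCode hα hv ha0 hk, isHermSelfOrth_extCode hnorm hn ha,
    minDistEq_extCode hα hv ha0 hk⟩

/-- First case of the embedding lemma: if `k(q+1) = n−1` and `a^{q+1} = −1`, then the
extension of the MDS Hermitian self-orthogonal GRS code by the extra row and column is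
an MDS Hermitian self-orthogonal `[n+1, k+1]_{q²}` code. -/
theorem stmt3 (q : ℕ) (hq : IsPrimePow q)
    (F : Type*) [Field F] [Fintype F] (hF : Fintype.card F = q ^ 2)
    (n : ℕ) (α : Fin n → F) (hα : Function.Injective α)
    (v : Fin n → F) (hv : ∀ i, v i ≠ 0)
    (hnorm : ∀ i, v i ^ (q + 1) * ∏ j ∈ Finset.univ.erase i, (α i - α j) = 1)
    (k : ℕ) (hk1 : 1 ≤ k) (hk2 : k * (q + 1) = n - 1)
    (hCk : Module.finrank F (evalCode k α v) = k ∧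
      IsHermSelfOrth q (evalCode k α v) ∧
      MinDistEq (evalCode k α v) (n - k + 1))
    (a : F) (ha : a ^ (q + 1) = -1) :
    Module.finrank F (extCode k α v a) = k + 1 ∧
    IsHermSelfOrth q (extCode k α v a) ∧
    MinDistEq (extCode k α v a) ((n + 1) - (k + 1) + 1) := by
  have hkq : 0 < k * (q + 1) := Nat.mul_pos hk1 q.succ_pos
  exact stmt3_general hnorm (by omega) ha
end

section
/- Let q be a prime power, let t be a positive divisor of q+1, set n = t(q−1)+1, and suppose k'' = ⌊n/(2t)⌋ ≥ 1. Then there exists an MDS Hermitian self-orthogonal [n, k'']_{q²} code. -/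
/-!
The code is a generalized Reed–Solomon code evaluated at `0` and at the `t(q-1)`-th roots of unity,
with column multipliers `w` at `0` and `1` elsewhere, where `w ^ (q+1) = t`. Such a code is MDS
because a nonzero polynomial of degree `< k` has fewer than `k` zeros.

The Hermitian product of the codewords of `X ^ a` and `X ^ b` is the power sum of degree `a + q b`
of the evaluation points, weighted by the `(q+1)`-th powers of the multipliers. The roots of unity
contribute `0` unless `t(q-1) ∣ a + q b`; then `q-1 ∣ a + b`, and `a + b < q - 1` leaves only
`a = b = 0`, where the sum is `w ^ (q+1) + t(q-1) = t q = 0` in `𝔽_{q²}`. A suitable `w ≠ 0` exists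
because `t` is a nonzero element of the prime field and `x ↦ x ^ (q+1)` is the norm from `𝔽_{q²}`
onto `𝔽_q`.
-/

open scoped BigOperators

open Polynomial

section GRS

variable {ι F : Type*} [Field F]

/-- The weighted evaluation map `p ↦ (vᵢ p(αᵢ))ᵢ` with evaluation points `α` and column
multipliers `v`, whose restrictions to bounded degree have the generalized Reed–Solomon codes as
images. -/
noncomputable def grsMap (α v : ι → F) : F[X] →ₗ[F] (ι → F) :=
  LinearMap.pi fun i => v i • leval (α i)

/-- The generalized Reed–Solomon code of the polynomials of degree `< k`, with
evaluation points `α` and column multipliers `v`. -/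
noncomputable def grsCode (α v : ι → F) (k : ℕ) : Submodule F (ι → F) :=
  (degreeLT F k).map (grsMap α v)

@[simp]
lemma grsMap_apply (α v : ι → F) (p : F[X]) (i : ι) : grsMap α v p i = v i * p.eval (α i) :=
  rfl

lemma grsCode_eq_span (α v : ι → F) (k : ℕ) :
    grsCode α v k = Submodule.span F ((fun a i => v i * α i ^ a) '' Set.Iio k) := by
  classical
  rw [grsCode, degreeLT_eq_span_X_pow, Submodule.map_span, Finset.coe_image, Set.image_image,
    Finset.coe_range]
  congr 2
  ext a i
  simp

variable {α v : ι → F} {k : ℕ}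

lemma ncard_grsMap_eq_zero_lt [Finite ι] (hα : Function.Injective α) (hv : ∀ i, v i ≠ 0) {p : F[X]}
    (hp : p ∈ degreeLT F k) (hp0 : p ≠ 0) : {i | grsMap α v p i = 0}.ncard < k := by
  contrapose! hp0
  rw [Set.ncard_eq_toFinset_card] at hp0
  refine eq_zero_of_degree_lt_of_eval_index_eq_zero _ hα.injOn
    ((mem_degreeLT.1 hp).trans_le (mod_cast hp0)) fun i hi => ?_
  simpa [hv i] using hi

variable [Fintype ι]

lemma finrank_grsCode (hα : Function.Injective α) (hv : ∀ i, v i ≠ 0)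
    (hk : k ≤ Fintype.card ι) : Module.finrank F (grsCode α v k) = k := by
  have hinj : Function.Injective ((grsMap α v).domRestrict (degreeLT F k)) := by
    refine (injective_iff_map_eq_zero _).2 fun ⟨p, hp⟩ hpv => ?_
    by_contra hp0
    have hzeros := ncard_grsMap_eq_zero_lt hα hv hp fun h => hp0 (Subtype.ext h)
    have hpv' : grsMap α v p = 0 := hpv
    simp only [hpv', Pi.zero_apply, Set.ofPred_true, Set.ncard_univ,
      Nat.card_eq_fintype_card] at hzeros
    exact hzeros.not_ge hk
  rw [grsCode, ← LinearMap.range_domRestrict, LinearMap.finrank_range_of_inj hinj,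
    (degreeLTEquiv F k).finrank_eq, Module.finrank_fin_fun]

lemma ncard_eq_zero_add_ncard_ne_zero (c : ι → F) :
    {i | c i = 0}.ncard + {i | c i ≠ 0}.ncard = Fintype.card ι := by
  rw [← Nat.card_eq_fintype_card]
  exact Set.ncard_add_ncard_compl {i | c i = 0}

lemma exists_mem_grsCode_ncard_ne_zero_eq (hα : Function.Injective α) (hv : ∀ i, v i ≠ 0)
    (hk : 1 ≤ k) (hkn : k ≤ Fintype.card ι) :
    ∃ c ∈ grsCode α v k, {i | c i ≠ 0}.ncard = Fintype.card ι - k + 1 := by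
  obtain ⟨s, -, hs⟩ := Finset.exists_subset_card_eq
    (show k - 1 ≤ (Finset.univ : Finset ι).card by rw [Finset.card_univ]; omega)
  have hdeg : Lagrange.nodal s α ∈ degreeLT F k := by
    rw [mem_degreeLT, Lagrange.degree_nodal, hs]
    exact_mod_cast Nat.sub_one_lt_of_lt hk
  have hzeros : {i | grsMap α v (Lagrange.nodal s α) i = 0} = s := by
    ext i
    simp [hv i, Lagrange.eval_nodal, Finset.prod_eq_zero_iff, sub_eq_zero, hα.eq_iff]
  refine ⟨_, Submodule.mem_map_of_mem hdeg, ?_⟩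
  have hweight := ncard_eq_zero_add_ncard_ne_zero (grsMap α v (Lagrange.nodal s α))
  rw [hzeros, Set.ncard_coe_finset, hs] at hweight
  omega

end GRS

section HermitianGRS

variable {F : Type*} [Field F] {n k : ℕ}

lemma minDistEq_grsCode {α v : Fin n → F} (hα : Function.Injective α) (hv : ∀ i, v i ≠ 0)
    (hk : 1 ≤ k) (hkn : k ≤ n) : MinDistEq (grsCode α v k) (n - k + 1) := by
  constructor
  · rintro _ ⟨p, hp, rfl⟩ hpv
    have hzeros := ncard_grsMap_eq_zero_lt hα hv hp fun h => hpv (by rw [h, map_zero])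
    have hweight := ncard_eq_zero_add_ncard_ne_zero (grsMap α v p)
    rw [Fintype.card_fin] at hweight
    omega
  · obtain ⟨c, hc, hweight⟩ :=
      exists_mem_grsCode_ncard_ne_zero_eq hα hv hk (hkn.trans_eq (Fintype.card_fin n).symm)
    rw [Fintype.card_fin] at hweight
    refine ⟨c, hc, fun hc0 => ?_, hweight⟩
    simp [hc0] at hweight

variable {q : ℕ} {σ : F →+* F}

lemma isHermSelfOrth_span (hσ : ∀ x, σ x = x ^ q) {s : Set (Fin n → F)}
    (h : ∀ c ∈ s, ∀ c' ∈ s, ∑ i, c i * c' i ^ q = 0) :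
    IsHermSelfOrth q (Submodule.span F s) := by
  simp only [← hσ] at h
  intro c hc c' hc'
  simp only [← hσ]
  induction hc, hc' using Submodule.span_induction₂ with
  | mem_mem c c' hc hc' => exact h c hc c' hc'
  | zero_left => simp
  | zero_right => simp
  | add_left c d c' _ _ _ hc hd => simp [add_mul, Finset.sum_add_distrib, hc, hd]
  | add_right c c' d' _ _ _ hc' hd' => simp [mul_add, Finset.sum_add_distrib, hc', hd']
  | smul_left r c c' _ _ ih => simp [mul_assoc, ← Finset.mul_sum, ih]
  | smul_right r c c' _ _ ih => simp [mul_left_comm _ (σ r), ← Finset.mul_sum, ih]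

lemma isHermSelfOrth_grsCode (hσ : ∀ x, σ x = x ^ q) {α v : Fin n → F}
    (h : ∀ a < k, ∀ b < k, ∑ i, v i ^ (q + 1) * α i ^ (a + q * b) = 0) :
    IsHermSelfOrth q (grsCode α v k) := by
  rw [grsCode_eq_span]
  refine isHermSelfOrth_span hσ ?_
  rintro _ ⟨a, ha, rfl⟩ _ ⟨b, hb, rfl⟩
  rw [← h a ha b hb]
  refine Finset.sum_congr rfl fun i _ => ?_
  ring

end HermitianGRS

section RootsOfUnity

lemma sum_pow_pow_eq_zero_of_not_dvd {R : Type*} [CommRing R] [IsDomain R] {ζ : R} {m e : ℕ}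
    (hζ : IsPrimitiveRoot ζ m) (he : ¬ m ∣ e) : ∑ i : Fin m, (ζ ^ (i : ℕ)) ^ e = 0 := by
  have hne : ζ ^ e - 1 ≠ 0 := sub_ne_zero.2 fun h => he (hζ.dvd_of_pow_eq_one e h)
  simp only [pow_right_comm ζ _ e]
  rw [← Finset.sum_range fun i => (ζ ^ e) ^ i]
  refine (mul_eq_zero.1 ?_).resolve_left hne
  rw [mul_geom_sum, pow_right_comm, hζ.pow_eq_one, one_pow, sub_self]

variable {F : Type*} [Field F]

/-- The evaluation points `0, 1, ζ, …, ζ ^ (m - 1)`; if `ζ` is a primitive `m`-th root of unity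
these are the roots of `X ^ (m + 1) - X`. -/
def zeroAndPowers (ζ : F) (m : ℕ) : Fin (m + 1) → F :=
  Fin.cons 0 fun i => ζ ^ (i : ℕ)

/-- The column multipliers for `zeroAndPowers ζ m`: `w` at the point `0` and `1` at the powers
of `ζ`. -/
def zeroMultiplier (w : F) (m : ℕ) : Fin (m + 1) → F :=
  Fin.cons w fun _ => 1

lemma zeroAndPowers_injective {ζ : F} {m : ℕ} (hζ : IsPrimitiveRoot ζ m) :
    Function.Injective (zeroAndPowers ζ m) := by
  refine Fin.cons_injective_iff.2 ⟨?_, fun i j hij => Fin.ext (hζ.pow_inj i.2 j.2 hij)⟩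
  rintro ⟨i, hi⟩
  exact pow_ne_zero _ (hζ.ne_zero i.pos.ne') hi

lemma zeroMultiplier_ne_zero {w : F} (hw : w ≠ 0) {m : ℕ} (i : Fin (m + 1)) :
    zeroMultiplier w m i ≠ 0 :=
  Fin.cases hw (fun _ => one_ne_zero) i

lemma sum_zeroMultiplier_pow_mul_zeroAndPowers_pow_eq_zero {ζ w : F} {m d e : ℕ}
    (hζ : IsPrimitiveRoot ζ m) (hw : w ^ d + m = 0) (he : m ∣ e → e = 0) :
    ∑ i, zeroMultiplier w m i ^ d * zeroAndPowers ζ m i ^ e = 0 := by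
  simp only [Fin.sum_univ_succ, zeroMultiplier, zeroAndPowers, Fin.cons_zero, Fin.cons_succ,
    one_pow, one_mul]
  by_cases hme : m ∣ e
  · simpa [he hme] using hw
  · have he0 : e ≠ 0 := fun h => hme (h ▸ dvd_zero m)
    rw [sum_pow_pow_eq_zero_of_not_dvd hζ hme, zero_pow he0, mul_zero, add_zero]

end RootsOfUnity

section FiniteField

lemma range_powMonoidHom_eq_ker {G : Type*} [CommGroup G] [IsCyclic G] [Finite G] {a b : ℕ}
    (h : Nat.card G = a * b) :
    (powMonoidHom a : G →* G).range = (powMonoidHom b : G →* G).ker := by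
  refine Subgroup.eq_of_le_of_card_ge ?_ ?_
  · rintro _ ⟨x, rfl⟩
    rw [MonoidHom.mem_ker, powMonoidHom_apply, powMonoidHom_apply, ← pow_mul, ← h, pow_card_eq_one']
  · have ha : 0 < a := Nat.pos_of_mul_pos_right (h ▸ Nat.card_pos)
    rw [IsCyclic.card_powMonoidHom_ker, IsCyclic.card_powMonoidHom_range, h,
      Nat.gcd_mul_right_left, Nat.gcd_mul_left_left, Nat.mul_div_cancel_left b ha]

variable {F : Type*} [Field F]

lemma exists_isPrimitiveRoot_of_dvd_card_units [Finite F] {m : ℕ} (hm : m ∣ Nat.card Fˣ) :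
    ∃ ζ : F, IsPrimitiveRoot ζ m := by
  obtain ⟨g, hg⟩ := IsCyclic.exists_ofOrder_eq_natCard (α := Fˣ)
  obtain ⟨s, hs⟩ := hm
  have hgs : IsPrimitiveRoot (g ^ s) m :=
    (hg ▸ IsPrimitiveRoot.orderOf g).pow Nat.card_pos (hs.trans (mul_comm m s))
  exact ⟨_, IsPrimitiveRoot.coe_units_iff.2 hgs⟩

variable [Fintype F] {q : ℕ}

lemma exists_ringHom_eq_pow_of_dvd_card (hq : q ∣ Fintype.card F) :
    ∃ σ : F →+* F, ∀ x, σ x = x ^ q := by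
  obtain ⟨p, _, m, hp, hcard⟩ := FiniteField.card' F
  obtain ⟨r, -, rfl⟩ := (Nat.dvd_prime_pow hp).1 (hcard ▸ hq)
  have : Fact p.Prime := ⟨hp⟩
  exact ⟨iterateFrobenius F p r, iterateFrobenius_def p r⟩

lemma card_units_eq_of_card_eq_sq (hF : Fintype.card F = q ^ 2) :
    Nat.card Fˣ = (q + 1) * (q - 1) := by
  rw [Nat.card_units, Nat.card_eq_fintype_card, hF]
  exact Nat.sq_sub_sq q 1

lemma natCast_eq_zero_of_card_eq_sq (hF : Fintype.card F = q ^ 2) : (q : F) = 0 := by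
  refine pow_eq_zero_iff two_ne_zero |>.1 ?_
  rw [← Nat.cast_pow, ← hF, FiniteField.cast_card_eq_zero]

lemma exists_pow_add_one_eq (hF : Fintype.card F = q ^ 2) {x : F} (hx : x ^ q = x) :
    ∃ w : F, w ^ (q + 1) = x := by
  obtain rfl | hx0 := eq_or_ne x 0
  · exact ⟨0, zero_pow q.succ_ne_zero⟩
  have hq : q ≠ 0 := by
    rintro rfl
    simp at hF
  have hker : Units.mk0 x hx0 ∈ (powMonoidHom (q - 1) : Fˣ →* Fˣ).ker := by
    rw [MonoidHom.mem_ker, powMonoidHom_apply, Units.ext_iff, Units.val_pow_eq_pow_val]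
    refine mul_right_cancel₀ hx0 ?_
    rw [Units.val_mk0, pow_sub_one_mul hq, hx, Units.val_one, one_mul]
  rw [← range_powMonoidHom_eq_ker (card_units_eq_of_card_eq_sq hF)] at hker
  obtain ⟨u, hu⟩ := hker
  exact ⟨u, by simpa using congrArg Units.val hu⟩

lemma exists_ne_zero_pow_add_one_eq_natCast (hF : Fintype.card F = q ^ 2) {t : ℕ}
    (ht : t ∣ q + 1) : ∃ w : F, w ≠ 0 ∧ w ^ (q + 1) = t := by
  obtain ⟨σ, hσ⟩ := exists_ringHom_eq_pow_of_dvd_card (hF ▸ dvd_pow_self q two_ne_zero)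
  obtain ⟨w, hw⟩ := exists_pow_add_one_eq hF ((hσ t).symm.trans (map_natCast σ t))
  have ht0 : (t : F) ≠ 0 := by
    have hdvd : (t : F) ∣ (q + 1 : ℕ) := Nat.cast_dvd_cast ht
    rw [Nat.cast_succ, natCast_eq_zero_of_card_eq_sq hF, zero_add] at hdvd
    exact ne_zero_of_dvd_ne_zero one_ne_zero hdvd
  exact ⟨w, ne_zero_pow q.succ_ne_zero (hw ▸ ht0), hw⟩

end FiniteField

lemma eq_zero_of_sub_one_dvd_add_mul {q a b : ℕ} (hab : a + b < q - 1)
    (h : q - 1 ∣ a + q * b) : a = 0 ∧ b = 0 := by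
  have hsplit : a + q * b = a + b + (q - 1) * b := by
    obtain ⟨r, rfl⟩ : ∃ r, q = r + 1 := ⟨q - 1, by omega⟩
    rw [Nat.add_sub_cancel]
    ring
  rw [hsplit, Nat.dvd_add_left (dvd_mul_right _ _)] at h
  exact Nat.add_eq_zero_iff.1 (Nat.eq_zero_of_dvd_of_lt h hab)

lemma two_mul_div_two_mul_le {q t : ℕ} (hq : 1 ≤ q) (ht : 0 < t) :
    2 * ((t * (q - 1) + 1) / (2 * t)) ≤ q := by
  have hn : t * (q - 1) + 1 ≤ q * t := by
    obtain ⟨r, rfl⟩ := Nat.exists_eq_add_of_le' hq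
    rw [Nat.add_sub_cancel]
    linarith [add_mul r 1 t, mul_comm r t]
  rw [mul_comm 2 t, ← Nat.div_div_eq_div_mul]
  exact (Nat.mul_div_le _ 2).trans (Nat.div_le_of_le_mul (by linarith [mul_comm q t]))

theorem stmt6_general (q t : ℕ) (htq : t ∣ q + 1) (k : ℕ) (hk1 : 1 ≤ k) (hkq : 2 * k ≤ q)
    (F : Type*) [Field F] [Fintype F] (hF : Fintype.card F = q ^ 2) :
    ∃ C : Submodule F (Fin (t * (q - 1) + 1) → F),
      Module.finrank F C = k ∧ IsHermSelfOrth q C ∧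
      MinDistEq C (t * (q - 1) + 1 - k + 1) := by
  obtain ⟨σ, hσ⟩ := exists_ringHom_eq_pow_of_dvd_card (hF ▸ dvd_pow_self q two_ne_zero)
  obtain ⟨ζ, hζ⟩ : ∃ ζ : F, IsPrimitiveRoot ζ (t * (q - 1)) :=
    exists_isPrimitiveRoot_of_dvd_card_units
      (card_units_eq_of_card_eq_sq hF ▸ mul_dvd_mul_right htq (q - 1))
  obtain ⟨w, hw0, hw⟩ := exists_ne_zero_pow_add_one_eq_natCast hF htq
  have hkn : k ≤ t * (q - 1) + 1 := by
    have := Nat.le_mul_of_pos_left (q - 1) (Nat.pos_of_dvd_of_pos htq q.succ_pos)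
    omega
  have hmoment_zero : w ^ (q + 1) + (t * (q - 1) : ℕ) = 0 := by
    rw [hw, Nat.cast_mul, Nat.cast_pred (by omega), natCast_eq_zero_of_card_eq_sq hF]
    ring
  have hα := zeroAndPowers_injective hζ
  have hv := zeroMultiplier_ne_zero hw0 (m := t * (q - 1))
  refine ⟨grsCode (zeroAndPowers ζ _) (zeroMultiplier w _) k, finrank_grsCode hα hv (by simpa),
    isHermSelfOrth_grsCode hσ fun a ha b hb => ?_, minDistEq_grsCode hα hv hk1 hkn⟩
  refine sum_zeroMultiplier_pow_mul_zeroAndPowers_pow_eq_zero hζ hmoment_zero fun hdvd => ?_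
  obtain ⟨rfl, rfl⟩ :=
    eq_zero_of_sub_one_dvd_add_mul (by omega) ((dvd_mul_left _ t).trans hdvd)
  rfl

/-- For `t ∣ q+1`, `n = t(q−1)+1` and `k'' = ⌊n/(2t)⌋ ≥ 1`, there exists an MDS
Hermitian self-orthogonal `[n, k'']_{q²}` code. -/
theorem stmt6 (q t : ℕ) (hq : IsPrimePow q) (ht : 0 < t) (htq : t ∣ q + 1)
    (n : ℕ) (hn : n = t * (q - 1) + 1)
    (k : ℕ) (hk : k = n / (2 * t)) (hk1 : 1 ≤ k)
    (F : Type*) [Field F] [Fintype F] (hF : Fintype.card F = q ^ 2) :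
    ∃ C : Submodule F (Fin n → F),
      Module.finrank F C = k ∧ IsHermSelfOrth q C ∧
      MinDistEq C (n - k + 1) := by
  subst hn hk
  exact stmt6_general q t htq _ hk1 (two_mul_div_two_mul_le hq.one_lt.le ht) F hF
end

section
/- Let q be a prime power, let α ∈ 𝔽_{q²} \ 𝔽_q, let t ≥ 1, and let u_1, …, u_t be pairwise distinct elements of 𝔽_q. Define h(x) = ∏_{i=1}^t ∏_{c ∈ 𝔽_q} (x − (u_i α + c)) ∈ 𝔽_{q²}[x]. Then for every i₀ ∈ {1,…,t} and every c₀ ∈ 𝔽_q, the formal derivative of h satisfies h'(u_{i₀} α + c₀) = −(α^q − α)^{t−1} · ∏_{i≠i₀} (u_{i₀} − u_i). In particular, (α^q − α)^{1−t} · h'(u_{i₀} α + c₀) lies in 𝔽_q^*. -/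
open scoped BigOperators

/-!
For a finite field `K` with `q` elements, substituting `X - C a` into
`∏ c : K, (X - C c) = X ^ q - X` shows, by additivity of the Frobenius map, that the polynomial
vanishing on the coset `a + K` is `X ^ q - X - C (a ^ q - a)`. Its derivative is `-1`, and for
`a = u * α` with `u ∈ K` its value at `v * α + c` is `(v - u) * (α ^ q - α)`. In the product over
the cosets `u i * α + K`, only the factor of index `i₀` vanishes at `u i₀ * α + c₀`, so a single
term of the product rule survives there.
-/

section

open Polynomial

lemma eval_derivative_prod_of_eval_eq_zero {R ι : Type*} [CommSemiring R] [DecidableEq ι]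
    {s : Finset ι} {f : ι → R[X]} {i : ι} (hi : i ∈ s) {x : R} (hx : (f i).eval x = 0) :
    (derivative (∏ j ∈ s, f j)).eval x =
      (derivative (f i)).eval x * ∏ j ∈ s.erase i, (f j).eval x := by
  rw [← Finset.mul_prod_erase s f hi, derivative_mul, eval_add, eval_mul, eval_mul, hx, zero_mul,
    add_zero, eval_prod]

section FiniteField

variable (K : Type*) [Field K] [Fintype K]

lemma prod_X_sub_C_univ : ∏ c : K, (X - C c) = X ^ Fintype.card K - X := by
  have hcard : 1 < Fintype.card K := Fintype.one_lt_card
  have hmonic : (X ^ Fintype.card K - X : K[X]).Monic :=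
    monic_X_pow_sub (by rw [degree_X]; exact_mod_cast hcard)
  have hroots := FiniteField.roots_X_pow_card_sub_X K
  have hcard_roots : (X ^ Fintype.card K - X : K[X]).roots.card =
      (X ^ Fintype.card K - X : K[X]).natDegree := by
    rw [hroots, FiniteField.X_pow_card_sub_X_natDegree_eq K hcard, Finset.card_val,
      Finset.card_univ]
  have hprod := prod_multiset_X_sub_C_of_monic_of_roots_card_eq hmonic hcard_roots
  rwa [hroots] at hprod

section Algebra

variable {R : Type*} [CommRing R] [Algebra K R]

lemma prod_X_sub_C_algebraMap :
    ∏ c : K, (X - C (algebraMap K R c)) = X ^ Fintype.card K - X := by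
  simpa only [Polynomial.map_prod, Polynomial.map_sub, Polynomial.map_pow, map_X, map_C] using
    congrArg (map (algebraMap K R)) (prod_X_sub_C_univ K)

lemma prod_X_sub_C_add_algebraMap (a : R) :
    ∏ c : K, (X - C (a + algebraMap K R c)) =
      X ^ Fintype.card K - X - C (a ^ Fintype.card K - a) := by
  have hfrob : (X - C a) ^ Fintype.card K = X ^ Fintype.card K - C a ^ Fintype.card K :=
    map_sub (FiniteField.frobeniusAlgHom K R[X]) X (C a)
  calc ∏ c : K, (X - C (a + algebraMap K R c))
      = (∏ c : K, (X - C (algebraMap K R c))).comp (X - C a) := by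
        simp only [prod_comp, sub_comp, X_comp, C_comp, C_add, sub_sub]
    _ = (X - C a) ^ Fintype.card K - (X - C a) := by
        rw [prod_X_sub_C_algebraMap, sub_comp, X_pow_comp, X_comp]
    _ = X ^ Fintype.card K - X - C (a ^ Fintype.card K - a) := by
        rw [hfrob, C_sub, C_pow]
        ring

lemma derivative_prod_X_sub_C_add_algebraMap (a : R) :
    derivative (∏ c : K, (X - C (a + algebraMap K R c))) = -1 := by
  have hcast : (Fintype.card K : R) = 0 := by
    rw [← map_natCast (algebraMap K R), FiniteField.cast_card_eq_zero, map_zero]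
  simp only [prod_X_sub_C_add_algebraMap, derivative_sub, derivative_X_pow, derivative_X,
    derivative_C, hcast, C_0, zero_mul, zero_sub, sub_zero]

lemma eval_prod_X_sub_C_mul_add_algebraMap (α : R) (u v c₀ : K) :
    (∏ c : K, (X - C (algebraMap K R u * α + algebraMap K R c))).eval
        (algebraMap K R v * α + algebraMap K R c₀) =
      (α ^ Fintype.card K - α) * (algebraMap K R v - algebraMap K R u) := by
  have hfrob (w c : K) : (algebraMap K R w * α + algebraMap K R c) ^ Fintype.card K =
      algebraMap K R w * α ^ Fintype.card K + algebraMap K R c := by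
    change FiniteField.frobeniusAlgHom K R (algebraMap K R w * α + algebraMap K R c) = _
    rw [map_add, map_mul, AlgHom.commutes, AlgHom.commutes, FiniteField.frobeniusAlgHom_apply]
  have hfrob_mul : (algebraMap K R u * α) ^ Fintype.card K =
      algebraMap K R u * α ^ Fintype.card K := by
    simpa only [map_zero, add_zero] using hfrob u 0
  simp only [prod_X_sub_C_add_algebraMap, eval_sub, eval_pow, eval_X, eval_C, hfrob, hfrob_mul]
  ring

variable {K}

theorem eval_derivative_prod_prod_X_sub_C {ι : Type*} [DecidableEq ι] (α : R) (u : ι → K)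
    {s : Finset ι} {i₀ : ι} (hi₀ : i₀ ∈ s) (c₀ : K) :
    (derivative (∏ i ∈ s, ∏ c : K,
        (X - C (algebraMap K R (u i) * α + algebraMap K R c)))).eval
          (algebraMap K R (u i₀) * α + algebraMap K R c₀) =
      -(α ^ Fintype.card K - α) ^ (s.card - 1) *
        ∏ i ∈ s.erase i₀, (algebraMap K R (u i₀) - algebraMap K R (u i)) := by
  rw [eval_derivative_prod_of_eval_eq_zero hi₀
      (by rw [eval_prod_X_sub_C_mul_add_algebraMap, sub_self, mul_zero]),
    derivative_prod_X_sub_C_add_algebraMap]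
  simp only [eval_prod_X_sub_C_mul_add_algebraMap, Finset.prod_mul_distrib, Finset.prod_const,
    Finset.card_erase_of_mem hi₀, eval_neg, eval_one]
  ring

end Algebra

variable {K}

lemma mem_range_algebraMap_iff_pow_card_eq {R : Type*} [CommRing R] [IsDomain R] [Algebra K R]
    {x : R} : x ∈ Set.range (algebraMap K R) ↔ x ^ Fintype.card K = x := by
  have heval : ∏ c : K, (x - algebraMap K R c) = x ^ Fintype.card K - x := by
    simpa only [eval_prod, eval_sub, eval_pow, eval_X, eval_C] using
      congrArg (eval x) (prod_X_sub_C_algebraMap K (R := R))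
  rw [← sub_eq_zero, ← heval, Finset.prod_eq_zero_iff]
  simp only [Finset.mem_univ, true_and, sub_eq_zero, Set.mem_range, eq_comm (a := x)]

lemma mem_subfield_iff_pow_card_eq {F : Type*} [Field F] {K : Subfield F} [Fintype K] {x : F} :
    x ∈ K ↔ x ^ Fintype.card K = x := by
  rw [← mem_range_algebraMap_iff_pow_card_eq, K.algebraMap_ofSubfield, K.coe_subtype,
    Subtype.range_coe, SetLike.mem_coe]

lemma exists_subfield_card_eq {F : Type*} [Field F] [Fintype F] {q n : ℕ}
    (hF : Fintype.card F = q ^ n) : ∃ (K : Subfield F) (_ : Fintype K), Fintype.card K = q := by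
  obtain ⟨p, _, m, hp, hm⟩ := FiniteField.card' F
  have : Fact p.Prime := ⟨hp⟩
  have hn : n ≠ 0 := by
    rintro rfl
    exact Fintype.one_lt_card.ne' (hF.trans (pow_zero q))
  obtain ⟨k, -, rfl⟩ := (Nat.dvd_prime_pow hp).1 (hm ▸ hF ▸ dvd_pow_self q hn)
  have hk : k ≠ 0 := by
    rintro rfl
    exact Fintype.one_lt_card.ne' (hF.trans (by rw [pow_zero, one_pow]))
  let _ : Algebra (ZMod p) F := ZMod.algebra F p
  have hfinrank : Module.finrank (ZMod p) F = k * n :=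
    Nat.pow_right_injective hp.two_le <| by
      simp only [FiniteField.pow_finrank_eq_card, hF, pow_mul]
  obtain ⟨f⟩ := FiniteField.nonempty_algHom_of_finrank_dvd (F := ZMod p) (K := GaloisField p k)
    (L := F) (by rw [GaloisField.finrank p hk, hfinrank]; exact dvd_mul_right k n)
  refine ⟨f.toRingHom.fieldRange, Fintype.ofFinite _, ?_⟩
  rw [Fintype.card_eq_nat_card, ← GaloisField.card p k hk]
  exact Nat.card_range_of_injective f.injective

end FiniteField

theorem stmt11_general {K F : Type*} [Field K] [Fintype K] [Field F] [Algebra K F]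
    {α : F} (hα : α ∉ Set.range (algebraMap K F))
    {t : ℕ} {u : Fin t → K} (hu : Function.Injective u) {h : F[X]}
    (hh : h = ∏ i : Fin t, ∏ c : K, (X - C (algebraMap K F (u i) * α + algebraMap K F c)))
    (i₀ : Fin t) (c₀ : K) :
    (derivative h).eval (algebraMap K F (u i₀) * α + algebraMap K F c₀) =
      -(α ^ Fintype.card K - α) ^ (t - 1) *
        ∏ i ∈ Finset.univ.erase i₀, (algebraMap K F (u i₀) - algebraMap K F (u i)) ∧
    (((α ^ Fintype.card K - α) ^ (t - 1))⁻¹ *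
        (derivative h).eval (algebraMap K F (u i₀) * α + algebraMap K F c₀)) ^ Fintype.card K =
      ((α ^ Fintype.card K - α) ^ (t - 1))⁻¹ *
        (derivative h).eval (algebraMap K F (u i₀) * α + algebraMap K F c₀) ∧
    ((α ^ Fintype.card K - α) ^ (t - 1))⁻¹ *
        (derivative h).eval (algebraMap K F (u i₀) * α + algebraMap K F c₀) ≠ 0 := by
  subst hh
  have hvalue := eval_derivative_prod_prod_X_sub_C α u (Finset.mem_univ i₀) c₀
  rw [Finset.card_fin] at hvalue
  have hβ : (α ^ Fintype.card K - α) ^ (t - 1) ≠ 0 :=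
    pow_ne_zero _ (sub_ne_zero.2 (mt mem_range_algebraMap_iff_pow_card_eq.2 hα))
  have hquot : ((α ^ Fintype.card K - α) ^ (t - 1))⁻¹ *
      (-(α ^ Fintype.card K - α) ^ (t - 1) *
        ∏ i ∈ Finset.univ.erase i₀, (algebraMap K F (u i₀) - algebraMap K F (u i))) =
      algebraMap K F (-∏ i ∈ Finset.univ.erase i₀, (u i₀ - u i)) := by
    simp only [map_neg, map_prod, map_sub]
    rw [neg_mul, mul_neg, inv_mul_cancel_left₀ hβ]
  rw [hvalue, hquot]
  refine ⟨rfl, mem_range_algebraMap_iff_pow_card_eq.1 ⟨_, rfl⟩, ?_⟩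
  rw [_root_.map_ne_zero, neg_ne_zero, Finset.prod_ne_zero_iff]
  exact fun i hi => sub_ne_zero.2 (hu.ne (Finset.ne_of_mem_erase hi).symm)

end

open Polynomial in
/-- For `α ∈ 𝔽_{q²} \\ 𝔽_q`, distinct `u₁,…,u_t ∈ 𝔽_q`, and
`h(x) = ∏ᵢ ∏_{c ∈ 𝔽_q} (x − (uᵢα + c))`, one has
`h'(u_{i₀}α + c₀) = −(α^q − α)^{t−1} ∏_{i≠i₀}(u_{i₀} − uᵢ)`; in particular
`(α^q − α)^{1−t} · h'(u_{i₀}α + c₀) ∈ 𝔽_q^*`. -/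
theorem stmt11 (q : ℕ) (hq : IsPrimePow q)
    (F : Type*) [Field F] [Fintype F] [DecidableEq F]
    (hF : Fintype.card F = q ^ 2)
    (α : F) (hαF : α ^ q ≠ α)
    (t : ℕ) (ht : 1 ≤ t)
    (u : Fin t → F) (hu : ∀ i, (u i) ^ q = u i) (huinj : Function.Injective u)
    (h : Polynomial F)
    (hh : h = ∏ i : Fin t, ∏ c ∈ Finset.univ.filter (fun c : F => c ^ q = c),
      (X - C (u i * α + c)))
    (i₀ : Fin t) (c₀ : F) (hc₀ : c₀ ^ q = c₀) :
    (Polynomial.derivative h).eval (u i₀ * α + c₀) =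
      -(α ^ q - α) ^ (t - 1) * ∏ i ∈ Finset.univ.erase i₀, (u i₀ - u i) ∧
    (((α ^ q - α) ^ (t - 1))⁻¹ *
        (Polynomial.derivative h).eval (u i₀ * α + c₀)) ^ q =
      ((α ^ q - α) ^ (t - 1))⁻¹ *
        (Polynomial.derivative h).eval (u i₀ * α + c₀) ∧
    ((α ^ q - α) ^ (t - 1))⁻¹ *
        (Polynomial.derivative h).eval (u i₀ * α + c₀) ≠ 0 := by
  obtain ⟨K, _, rfl⟩ := exists_subfield_card_eq hF
  exact stmt11_general (u := fun i => (⟨u i, mem_subfield_iff_pow_card_eq.2 (hu i)⟩ : K))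
    (mt mem_range_algebraMap_iff_pow_card_eq.1 hαF)
    (fun _ _ hij => huinj (Subtype.ext_iff.1 hij))
    (hh.trans (Finset.prod_congr rfl fun i _ => Finset.prod_subtype _
      (fun c => (Finset.mem_filter_univ c).trans mem_subfield_iff_pow_card_eq.symm) _))
    i₀ ⟨c₀, mem_subfield_iff_pow_card_eq.2 hc₀⟩
end
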